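/- Let L denote the ideal of S = k[x,y,z,t,u,v,w] generated by f1, f2, f3, g1, g2, g3 (with a > 2b > 0). Then the following colon ideals are as stated: (i) L : H1 = (x^b, y^b, z^{a-b})S; (ii) (L, H1) : H2 = (x^b, y^{a-2b}, z^b)S; (iii) (L, H1, H2) : H3 = (x^{a-2b}, y^b, z^b)S. -/

import Mathlib

set_option synthInstance.maxHeartbeats 1000000

open MvPolynomial

/-! Put `c = a - b`. The ideal `L` is generated by differences of two monomials with the same image
in the Rees algebra of `(x ^ a, y ^ a, z ^ a, (xyz) ^ b)`. So `L` is annihilated by the sum of the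
coefficients over any set of monomials that is closed under replacing, as a factor, either term of
such a difference by the other. If `x`, `y` and `z` all have exponents less than `c` in a monomial
`m₀`, then the monomials with the same image as `m₀` whose exponents in `t`, `u` and `v` are bounded
by those of `m₀` form such a set, in which `m₀` is the only element of maximal degree in `t`, `u`
and `v`.

Each `H` is a difference `p - q` of monomials in which `q` has the greater degree in `t`, `u` and
`v`, and some power `μ` of one of `x`, `y`, `z` multiplies the previous `H`s into `L`. If `f` lies
in the colon ideal, then `f * H * μ` lies in `L`. The functional attached to `m * p * μ` then picks
out the coefficient in `f` of a monomial `m` outside the claimed ideal, provided that the degree of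
`m` in `t`, `u` and `v` is minimal among such monomials of `f`. Hence no such `m` exists. -/

section MonomialBasis

variable {k A M : Type*} [CommRing k] [CommRing A] [Algebra k A]

/-- The sum of the coefficients of an element of `A` over the basis vectors indexed by `T`. -/
noncomputable def coeffSum (B : Module.Basis M k A) (T : Set M) : A →ₗ[k] k :=
  B.constr k (T.indicator 1)

theorem coeffSum_basis (B : Module.Basis M k A) (T : Set M) (m : M) :
    coeffSum B T (B m) = T.indicator 1 m :=
  B.constr_basis k _ m

theorem coeffSum_eq_zero_of_mem_span [AddCommMonoid M] {B : Module.Basis M k A}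
    (hB : ∀ m p, B (m + p) = B m * B p) {T : Set M} {G : Set A}
    (hG : ∀ g ∈ G, ∃ p q, g = B p - B q ∧ ∀ m, m + p ∈ T ↔ m + q ∈ T)
    {f : A} (hf : f ∈ Ideal.span G) : coeffSum B T f = 0 := by
  induction hf using Submodule.closure_induction with
  | zero => exact map_zero _
  | add f g _ _ hf hg => rw [map_add, hf, hg, add_zero]
  | smul_mem s g hg =>
    obtain ⟨p, q, rfl, hT⟩ := hG g hg
    suffices coeffSum B T ∘ₗ LinearMap.mulRight k (B p - B q) = 0 from LinearMap.congr_fun this s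
    refine B.ext fun m => ?_
    simp only [LinearMap.comp_apply, LinearMap.mulRight_apply, mul_sub, ← hB, map_sub,
      coeffSum_basis, LinearMap.zero_apply]
    rw [sub_eq_zero]
    classical simp only [Set.indicator_apply, hT m, Pi.one_apply]

theorem map_eq_repr_of_basis (B : Module.Basis M k A) (Φ : A →ₗ[k] k) {m : M} (f : A)
    (hm : Φ (B m) = 1) (h : ∀ m' ≠ m, B.repr f m' ≠ 0 → Φ (B m') = 0) : Φ f = B.repr f m := by
  conv_lhs => rw [← B.linearCombination_repr f, Finsupp.linearCombination_apply, map_finsuppSum]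
  rw [Finsupp.sum, Finset.sum_eq_single m]
  · simp [hm]
  · intro m' hm' hne
    rw [map_smul, h m' hne (Finsupp.mem_support_iff.mp hm'), smul_zero]
  · intro hm'
    simp [Finsupp.notMem_support_iff.mp hm']

theorem mem_of_forall_basis_mem (B : Module.Basis M k A) {I : Ideal A} {f : A}
    (h : ∀ m, B.repr f m ≠ 0 → B m ∈ I) : f ∈ I := by
  rw [← B.linearCombination_repr f, Finsupp.linearCombination_apply]
  exact Submodule.sum_mem _ fun m hm =>
    Submodule.smul_of_tower_mem I _ (h m (Finsupp.mem_support_iff.mp hm))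

end MonomialBasis

section SyzygyIdeal

variable {A ι : Type*} [CommRing A] [Fintype ι] [LinearOrder ι]

/-- The ideal generated by the linear forms in the `t i` and `w` that come from the syzygies of
the `x i ^ (b + c)` and `(∏ j, x j) ^ b`: it defines the symmetric algebra of the ideal generated
by these monomials. The exponent `a` of the informal statement is `b + c`. -/
def syzygyIdeal (x t : ι → A) (w : A) (b c : ℕ) : Ideal A :=
  Ideal.span ({f | ∃ i j, i < j ∧ f = x i ^ (b + c) * t j - x j ^ (b + c) * t i} ∪
    Set.range fun i => x i ^ c * w - (∏ j ∈ Finset.univ.erase i, x j) ^ b * t i)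

theorem pow_mul_sub_mem_syzygyIdeal (x t : ι → A) (w : A) (b c : ℕ) (i j : ι) :
    x i ^ (b + c) * t j - x j ^ (b + c) * t i ∈ syzygyIdeal x t w b c := by
  have hlt : ∀ i j, i < j → x i ^ (b + c) * t j - x j ^ (b + c) * t i ∈ syzygyIdeal x t w b c :=
    fun i j hij => Ideal.subset_span (Or.inl ⟨i, j, hij, rfl⟩)
  rcases lt_trichotomy i j with hij | rfl | hji
  · exact hlt i j hij
  · simp
  · simpa only [neg_sub] using neg_mem (hlt j i hji)

theorem pow_mul_sub_prod_mem_syzygyIdeal (x t : ι → A) (w : A) (b c : ℕ) (i : ι) :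
    x i ^ c * w - (∏ j ∈ Finset.univ.erase i, x j) ^ b * t i ∈ syzygyIdeal x t w b c :=
  Ideal.subset_span (Or.inr ⟨i, rfl⟩)

end SyzygyIdeal

section Quadric

variable {A : Type*} [CommRing A]

/-- The quadratic relation `H` between `t i`, `t j` and `w` in which `l` is the third index. The
exponent `a - 2 * b` of the informal statement is `n`. -/
def quadric (x t : Fin 3 → A) (w : A) (b n : ℕ) (i j l : Fin 3) : A :=
  (x i * x j) ^ n * w ^ 2 - x l ^ (2 * b) * t i * t j

theorem quadric_comm (x t : Fin 3 → A) (w : A) (b n : ℕ) (i j l : Fin 3) :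
    quadric x t w b n i j l = quadric x t w b n j i l := by
  unfold quadric
  ring

theorem univ_fin_three_eq_of_ne {i j l : Fin 3} (hij : i ≠ j) (hil : i ≠ l) (hjl : j ≠ l) :
    Finset.univ = {i, j, l} := by
  decide +revert

theorem prod_univ_erase_of_ne (x : Fin 3 → A) {i j l : Fin 3} (hij : i ≠ j) (hil : i ≠ l)
    (hjl : j ≠ l) : ∏ m ∈ Finset.univ.erase i, x m = x j * x l := by
  rw [univ_fin_three_eq_of_ne hij hil hjl, Finset.erase_insert (by simp [hij, hil]),
    Finset.prod_pair hjl]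

variable (x t : Fin 3 → A) (w : A) (b n : ℕ)

theorem syzygyIdeal_fin_three (c : ℕ) : syzygyIdeal x t w b c = Ideal.span
    {x 0 ^ (b + c) * t 1 - x 1 ^ (b + c) * t 0, x 0 ^ (b + c) * t 2 - x 2 ^ (b + c) * t 0,
      x 1 ^ (b + c) * t 2 - x 2 ^ (b + c) * t 1, x 0 ^ c * w - (x 1 * x 2) ^ b * t 0,
      x 1 ^ c * w - (x 0 * x 2) ^ b * t 1, x 2 ^ c * w - (x 0 * x 1) ^ b * t 2} := by
  have hprod₀ : ∏ m ∈ Finset.univ.erase 0, x m = x 1 * x 2 := by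
    apply prod_univ_erase_of_ne <;> decide
  have hprod₁ : ∏ m ∈ Finset.univ.erase 1, x m = x 0 * x 2 := by
    apply prod_univ_erase_of_ne <;> decide
  have hprod₂ : ∏ m ∈ Finset.univ.erase 2, x m = x 0 * x 1 := by
    apply prod_univ_erase_of_ne <;> decide
  apply le_antisymm
  · rw [syzygyIdeal, Ideal.span_le]
    rintro _ (⟨i, j, hij, rfl⟩ | ⟨i, rfl⟩) <;> apply Ideal.subset_span
    · fin_cases i <;> fin_cases j <;> simp at hij ⊢
    · fin_cases i <;> simp [hprod₀, hprod₁, hprod₂]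
  · simp only [Ideal.span_le, Set.insert_subset_iff, Set.singleton_subset_iff, SetLike.mem_coe,
      ← hprod₀, ← hprod₁, ← hprod₂, pow_mul_sub_mem_syzygyIdeal,
      pow_mul_sub_prod_mem_syzygyIdeal, and_self]

theorem pow_mul_quadric_mem_of_mem (i j l : Fin 3) {K : Ideal A}
    (hK : syzygyIdeal x t w b (b + n) ≤ K) (h : quadric x t w b n i l j ∈ K) :
    x l ^ n * quadric x t w b n i j l ∈ K := by
  convert add_mem (Ideal.mul_mem_left _ (x j ^ n) h) (Ideal.mul_mem_left _ (t i)
    (hK (pow_mul_sub_mem_syzygyIdeal x t w b (b + n) j l))) using 1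
  unfold quadric
  ring

variable {i j l : Fin 3} (hij : i ≠ j) (hil : i ≠ l) (hjl : j ≠ l)
include hij hil hjl

theorem pow_mul_quadric_mem :
    x i ^ b * quadric x t w b n i j l ∈ syzygyIdeal x t w b (b + n) := by
  have hi := pow_mul_sub_prod_mem_syzygyIdeal x t w b (b + n) i
  have hj := pow_mul_sub_prod_mem_syzygyIdeal x t w b (b + n) j
  rw [prod_univ_erase_of_ne x hij hil hjl] at hi
  rw [prod_univ_erase_of_ne x hij.symm hjl hil] at hj
  convert add_mem (Ideal.mul_mem_left _ (x j ^ n * w) hi)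
    (Ideal.mul_mem_left _ (x l ^ b * t i) hj) using 1
  unfold quadric
  ring

theorem pow_mul_quadric_mem_right :
    x j ^ b * quadric x t w b n i j l ∈ syzygyIdeal x t w b (b + n) := by
  rw [quadric_comm]
  exact pow_mul_quadric_mem x t w b n hij.symm hjl hil

theorem pow_mul_quadric_mem_third :
    x l ^ (b + n) * quadric x t w b n i j l ∈ syzygyIdeal x t w b (b + n) := by
  have hi := pow_mul_sub_prod_mem_syzygyIdeal x t w b (b + n) i
  have hl := pow_mul_sub_prod_mem_syzygyIdeal x t w b (b + n) l
  have hjl' := pow_mul_sub_mem_syzygyIdeal x t w b (b + n) j l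
  rw [prod_univ_erase_of_ne x hij hil hjl] at hi
  rw [prod_univ_erase_of_ne x hil.symm hjl.symm hij] at hl
  convert add_mem (add_mem (Ideal.mul_mem_left _ ((x i * x j) ^ n * w) hl)
    (Ideal.mul_mem_left _ (x j ^ (b + n) * t l) hi)) (Ideal.mul_mem_left _ (x l ^ b * t i) hjl')
    using 1
  unfold quadric
  ring

end Quadric

section Fiber

variable {n : ℕ}

/-- Exponent vectors of the monomials of `k[x₁, …, xₙ][t₁, …, tₙ, w]`: the first component is the
exponent of the `x i`, the second one that of the `t i`, followed by that of `w`. -/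
abbrev Exponent (n : ℕ) : Type := (Fin n →₀ ℕ) × (Fin (n + 1) →₀ ℕ)

/-- The total degree of a monomial in the variables `t i`. -/
def tDegree (m : Exponent n) : ℕ :=
  ∑ i : Fin n, m.2 i.castSucc

theorem tDegree_add (m p : Exponent n) : tDegree (m + p) = tDegree m + tDegree p :=
  Finset.sum_add_distrib

/-- The exponent of the image of a monomial in the Rees algebra, where `t i` is mapped to
`x i ^ (b + c) * T` and `w` to `(∏ j, x j) ^ b * T`: first the exponents of the `x i`, then
that of `T`. -/
noncomputable def reesDegree (b c : ℕ) (m : Exponent n) : (Fin n → ℕ) × ℕ :=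
  (fun i => m.1 i + (b + c) * m.2 i.castSucc + b * m.2 (Fin.last n), m.2.degree)

theorem reesDegree_add (b c : ℕ) (m p : Exponent n) :
    reesDegree b c (m + p) = reesDegree b c m + reesDegree b c p := by
  ext i
  · simp only [reesDegree, Prod.fst_add, Prod.snd_add, Finsupp.add_apply, Pi.add_apply]
    ring
  · exact map_add Finsupp.degree m.2 p.2

theorem degree_snd_eq_tDegree_add (m : Exponent n) : m.2.degree = tDegree m + m.2 (Fin.last n) := by
  rw [Finsupp.degree_eq_sum, Fin.sum_univ_castSucc, tDegree]

/-- The monomials with the same image as `m₀` in the Rees algebra whose exponents in the `t i` are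
bounded by those of `m₀`. -/
def boundedFiber (b c : ℕ) (m₀ : Exponent n) : Set (Exponent n) :=
  {m | reesDegree b c m = reesDegree b c m₀ ∧ ∀ i : Fin n, m.2 i.castSucc ≤ m₀.2 i.castSucc}

variable {b c : ℕ} {m m₀ p : Exponent n}

theorem tDegree_le_of_mem_boundedFiber (h : m ∈ boundedFiber b c m₀) : tDegree m ≤ tDegree m₀ :=
  Finset.sum_le_sum fun i _ => h.2 i

theorem last_le_of_mem_boundedFiber (h : m ∈ boundedFiber b c m₀) :
    m₀.2 (Fin.last n) ≤ m.2 (Fin.last n) := by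
  have hdeg : m.2.degree = m₀.2.degree := congrArg Prod.snd h.1
  rw [degree_snd_eq_tDegree_add, degree_snd_eq_tDegree_add] at hdeg
  have := tDegree_le_of_mem_boundedFiber h
  omega

theorem eq_of_mem_boundedFiber (h : m ∈ boundedFiber b c m₀) (hm : tDegree m₀ ≤ tDegree m) :
    m = m₀ := by
  have ht : ∀ i : Fin n, m.2 i.castSucc = m₀.2 i.castSucc := fun i =>
    (Finset.sum_eq_sum_iff_of_le fun i _ => h.2 i).mp
      ((tDegree_le_of_mem_boundedFiber h).antisymm hm) i (Finset.mem_univ i)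
  have hdeg : m.2.degree = m₀.2.degree := congrArg Prod.snd h.1
  have hw : m.2 (Fin.last n) = m₀.2 (Fin.last n) := by
    simpa [degree_snd_eq_tDegree_add, tDegree, ht] using hdeg
  have hx : ∀ i, m.1 i = m₀.1 i := by
    simpa [reesDegree, ht, hw, funext_iff] using congrArg Prod.fst h.1
  exact Prod.ext (Finsupp.ext hx) (Finsupp.ext (Fin.lastCases hw ht))

/-- `x i` has exponent less than `c` in `m₀`, so if it has exponent at least `c` in another monomial
of the fibre, then this excess comes from a missing factor `t i`. -/
theorem castSucc_lt_of_mem_boundedFiber (h : m ∈ boundedFiber b c m₀) {i : Fin n}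
    (hm₀ : m₀.1 i < c) (hi : c ≤ m.1 i) : m.2 i.castSucc < m₀.2 i.castSucc := by
  have hx : m.1 i + (b + c) * m.2 i.castSucc + b * m.2 (Fin.last n) =
      m₀.1 i + (b + c) * m₀.2 i.castSucc + b * m₀.2 (Fin.last n) :=
    congrFun (congrArg Prod.fst h.1) i
  have hw : b * m₀.2 (Fin.last n) ≤ b * m.2 (Fin.last n) :=
    Nat.mul_le_mul_left b (last_le_of_mem_boundedFiber h)
  exact lt_of_mul_lt_mul_left (a := b + c) (by omega) (Nat.zero_le _)

theorem add_mem_boundedFiber_of_le {q : Exponent n} (hpq : reesDegree b c p = reesDegree b c q)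
    (hq : ∀ i : Fin n, q.2 i.castSucc ≤ p.2 i.castSucc) (h : m + p ∈ boundedFiber b c m₀) :
    m + q ∈ boundedFiber b c m₀ :=
  ⟨by rw [← h.1, reesDegree_add, reesDegree_add, hpq],
    fun i => (Nat.add_le_add_left (hq i) _).trans (h.2 i)⟩

theorem add_mem_boundedFiber_of_le_add_single {q : Exponent n} {i : Fin n} (hm₀ : m₀.1 i < c)
    (hp : c ≤ p.1 i) (hpq : reesDegree b c p = reesDegree b c q)
    (hq : ∀ j : Fin n, q.2 j.castSucc ≤ p.2 j.castSucc + Finsupp.single i 1 j)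
    (h : m + p ∈ boundedFiber b c m₀) : m + q ∈ boundedFiber b c m₀ := by
  refine ⟨by rw [← h.1, reesDegree_add, reesDegree_add, hpq], fun j => ?_⟩
  have hlt := castSucc_lt_of_mem_boundedFiber h hm₀ (hp.trans (Nat.le_add_left _ _))
  have hj := h.2 j
  have hqj := hq j
  simp only [Prod.snd_add, Finsupp.add_apply] at hlt hj ⊢
  obtain rfl | hij := eq_or_ne i j
  · rw [Finsupp.single_eq_same] at hqj
    omega
  · rw [Finsupp.single_eq_of_ne hij.symm] at hqj
    omega

theorem add_mem_boundedFiber_iff_swap (hm₀ : ∀ i, m₀.1 i < c) {i j : Fin n} (m : Exponent n) :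
    m + (Finsupp.single i (b + c), Finsupp.single j.castSucc 1) ∈ boundedFiber b c m₀ ↔
      m + (Finsupp.single j (b + c), Finsupp.single i.castSucc 1) ∈ boundedFiber b c m₀ := by
  have himp : ∀ i j : Fin n,
      m + (Finsupp.single i (b + c), Finsupp.single j.castSucc 1) ∈ boundedFiber b c m₀ →
        m + (Finsupp.single j (b + c), Finsupp.single i.castSucc 1) ∈ boundedFiber b c m₀ := by
    intro i j
    refine add_mem_boundedFiber_of_le_add_single (hm₀ i) (by simp) ?_ fun l => ?_
    · ext l
      · simp only [reesDegree, Finsupp.single_apply, Fin.castSucc_inj, Fin.castSucc_ne_last]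
        split_ifs <;> ring
      · simp [reesDegree]
    · simp [Finsupp.single_apply]
  exact ⟨himp i j, himp j i⟩

theorem add_mem_boundedFiber_iff_prod (hm₀ : ∀ i, m₀.1 i < c) {i : Fin n} (m : Exponent n) :
    m + (Finsupp.single i c, Finsupp.single (Fin.last n) 1) ∈ boundedFiber b c m₀ ↔
      m + (∑ j ∈ Finset.univ.erase i, Finsupp.single j b, Finsupp.single i.castSucc 1) ∈
        boundedFiber b c m₀ := by
  have hdeg : reesDegree b c (Finsupp.single i c, Finsupp.single (Fin.last n) 1) = reesDegree b c
      (∑ j ∈ Finset.univ.erase i, Finsupp.single j b, Finsupp.single i.castSucc 1) := by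
    ext l
    · obtain rfl | hil := eq_or_ne i l
      · simp [reesDegree, Finsupp.finsetSum_apply, Finsupp.single_apply, add_comm]
      · simp [reesDegree, Finsupp.finsetSum_apply, Finsupp.single_apply, hil, hil.symm]
    · simp [reesDegree]
  constructor
  · refine add_mem_boundedFiber_of_le_add_single (hm₀ i) (by simp) hdeg fun l => ?_
    simp [Finsupp.single_apply]
  · refine add_mem_boundedFiber_of_le hdeg.symm fun l => ?_
    simp [Finsupp.single_apply]

end Fiber

section Reduction

variable {k A : Type*} [CommRing k] [CommRing A] [Algebra k A] {n b c : ℕ}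
  {B : Module.Basis (Exponent n) k A} (hB : ∀ m p, B (m + p) = B m * B p)
  {L K : Ideal A} {μ p q m : Exponent n} {f : A}
include hB

theorem coeffSum_boundedFiber_mul (hpq : tDegree p < tDegree q) {m' : Exponent n}
    (hm : tDegree m ≤ tDegree m') :
    coeffSum B (boundedFiber b c (m + p + μ)) (B m' * (B p - B q) * B μ) =
      Set.indicator {m} 1 m' := by
  have hp : m' + p + μ ∈ boundedFiber b c (m + p + μ) ↔ m' ∈ ({m} : Set (Exponent n)) := by
    refine ⟨fun h => ?_, fun h => ?_⟩
    · have := eq_of_mem_boundedFiber h (by simpa only [tDegree_add, add_le_add_iff_right] using hm)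
      simpa only [add_left_inj, Set.mem_singleton_iff] using this
    · rw [Set.mem_singleton_iff.mp h]
      exact ⟨rfl, fun _ => le_rfl⟩
  have hq : m' + q + μ ∉ boundedFiber b c (m + p + μ) := fun h => by
    have := tDegree_le_of_mem_boundedFiber h
    simp only [tDegree_add] at this
    omega
  classical
  simp only [mul_sub, sub_mul, ← hB, map_sub, coeffSum_basis, Set.indicator_apply, hp, hq,
    if_false, sub_zero, Pi.one_apply]

theorem repr_eq_zero_of_mem_colon_basis_sub (hpq : tDegree p < tDegree q)
    (hL : ∀ f ∈ L, coeffSum B (boundedFiber b c (m + p + μ)) f = 0)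
    (hK : K ≤ L.colon {B μ}) (hf : f ∈ K.colon {B p - B q})
    (hm : ∀ m', B.repr f m' ≠ 0 → B m' ∉ K.colon {B p - B q} → tDegree m ≤ tDegree m') :
    B.repr f m = 0 := by
  obtain ⟨Φ, hΦ⟩ : ∃ Φ : A →ₗ[k] k, ∀ g,
      Φ g = coeffSum B (boundedFiber b c (m + p + μ)) (g * (B p - B q) * B μ) :=
    ⟨coeffSum B _ ∘ₗ LinearMap.mulRight k (B μ) ∘ₗ LinearMap.mulRight k (B p - B q), fun _ => rfl⟩
  have hΦ_colon : ∀ g ∈ K.colon {B p - B q}, Φ g = 0 := fun g hg => by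
    rw [hΦ]
    exact hL _ (Submodule.mem_colon_singleton.mp (hK (Submodule.mem_colon_singleton.mp hg)))
  have hΦ_basis : ∀ m', tDegree m ≤ tDegree m' → Φ (B m') = Set.indicator {m} 1 m' :=
    fun m' hm' => by rw [hΦ, coeffSum_boundedFiber_mul hB hpq hm']
  have hΦ_self : Φ (B m) = 1 := by
    rw [hΦ_basis m le_rfl, Set.indicator_of_mem (Set.mem_singleton m), Pi.one_apply]
  rw [← map_eq_repr_of_basis B Φ f hΦ_self, hΦ_colon f hf]
  intro m' hne hm'
  by_cases hmem : B m' ∈ K.colon {B p - B q}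
  · exact hΦ_colon _ hmem
  · rw [hΦ_basis m' (hm m' hm' hmem), Set.indicator_of_notMem (by simpa using hne)]

theorem mem_of_mem_colon_basis_sub {I : Ideal A} (hpq : tDegree p < tDegree q)
    (hL : ∀ m, B m ∉ I → ∀ f ∈ L, coeffSum B (boundedFiber b c (m + p + μ)) f = 0)
    (hK : K ≤ L.colon {B μ}) (hI : I ≤ K.colon {B p - B q}) (hf : f ∈ K.colon {B p - B q}) :
    f ∈ I := by
  refine mem_of_forall_basis_mem B fun m => ?_
  induction h : tDegree m using Nat.strong_induction_on generalizing m with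
  | _ d ih =>
    intro hm
    by_contra hmem
    refine hm (repr_eq_zero_of_mem_colon_basis_sub hB hpq (hL m hmem) hK hf fun m' hm' hmem' => ?_)
    by_contra! hlt
    exact hmem' (hI (ih _ (h ▸ hlt) m' rfl hm'))

end Reduction

section PolynomialRing

variable (n : ℕ) (k : Type*) [CommRing k]

/-- The basis of monomials of `k[x₁, …, xₙ][t₁, …, tₙ, w]`. -/
noncomputable def monomialBasis :
    Module.Basis (Exponent n) k (MvPolynomial (Fin (n + 1)) (MvPolynomial (Fin n) k)) :=
  (basisMonomials (Fin n) k).smulTower (basisMonomials (Fin (n + 1)) (MvPolynomial (Fin n) k))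

variable {n k}

theorem monomialBasis_apply (m : Exponent n) :
    monomialBasis n k m = C (monomial m.1 1) * monomial m.2 1 := by
  rw [monomialBasis, Module.Basis.smulTower_apply, smul_eq_C_mul, coe_basisMonomials,
    coe_basisMonomials]

theorem monomialBasis_add (m p : Exponent n) :
    monomialBasis n k (m + p) = monomialBasis n k m * monomialBasis n k p := by
  simp [monomialBasis_apply, C_mul_monomial, monomial_mul]

theorem monomialBasis_single_zero (i : Fin n) (e : ℕ) :
    monomialBasis n k (Finsupp.single i e, 0) = C (X i) ^ e := by
  simp [monomialBasis_apply, X_pow_eq_monomial, ← map_pow]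

/-- The ideal `syzygyIdeal` in the polynomial ring `k[x₁, …, xₙ][t₁, …, tₙ, w]`. -/
noncomputable abbrev polynomialSyzygyIdeal (n : ℕ) (k : Type*) [CommRing k] (b c : ℕ) :
    Ideal (MvPolynomial (Fin (n + 1)) (MvPolynomial (Fin n) k)) :=
  syzygyIdeal (fun i => C (X i)) (fun i => X i.castSucc) (X (Fin.last n)) b c

theorem coeffSum_boundedFiber_eq_zero {b c : ℕ} {m₀ : Exponent n} (hm₀ : ∀ i, m₀.1 i < c)
    {f : MvPolynomial (Fin (n + 1)) (MvPolynomial (Fin n) k)}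
    (hf : f ∈ polynomialSyzygyIdeal n k b c) :
    coeffSum (monomialBasis n k) (boundedFiber b c m₀) f = 0 := by
  refine coeffSum_eq_zero_of_mem_span (B := monomialBasis n k) monomialBasis_add ?_ hf
  rintro _ (⟨i, j, -, rfl⟩ | ⟨i, rfl⟩)
  · refine ⟨_, _, ?_, add_mem_boundedFiber_iff_swap hm₀ (i := i) (j := j)⟩
    simp only [monomialBasis_apply, ← X_pow_eq_monomial, map_pow, pow_one]
  · refine ⟨_, _, ?_, add_mem_boundedFiber_iff_prod hm₀ (i := i)⟩
    simp only [monomialBasis_apply, monomial_sum_one, ← X_pow_eq_monomial, map_prod, map_pow,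
      pow_one, Finset.prod_pow]

theorem monomialBasis_mem_of_le {I : Ideal (MvPolynomial (Fin (n + 1)) (MvPolynomial (Fin n) k))}
    {m : Exponent n} {i : Fin n} {e : ℕ} (hi : C (X i) ^ e ∈ I) (h : e ≤ m.1 i) :
    monomialBasis n k m ∈ I := by
  have hm : m - (Finsupp.single i e, 0) + (Finsupp.single i e, 0) = m :=
    tsub_add_cancel_of_le (Prod.mk_le_mk.mpr ⟨Finsupp.single_le_iff.mpr h, bot_le⟩)
  rw [← hm, monomialBasis_add, monomialBasis_single_zero]
  exact I.mul_mem_left _ hi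

theorem colon_span_monomialBasis_sub {b c : ℕ} {μ p q : Exponent n} {α : Fin n → ℕ}
    {K : Ideal (MvPolynomial (Fin (n + 1)) (MvPolynomial (Fin n) k))}
    (hpq : tDegree p < tDegree q) (hα : ∀ i, α i + p.1 i + μ.1 i ≤ c)
    (hK : K ≤ (polynomialSyzygyIdeal n k b c).colon {monomialBasis n k μ})
    (hI : ∀ i, C (X i) ^ α i ∈ K.colon {monomialBasis n k p - monomialBasis n k q}) :
    K.colon (Ideal.span {monomialBasis n k p - monomialBasis n k q}) =
      Ideal.span (Set.range fun i => C (X i) ^ α i) := by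
  rw [Ideal.colon_span]
  have hle : Ideal.span (Set.range fun i => C (X i) ^ α i) ≤
      K.colon {monomialBasis n k p - monomialBasis n k q} :=
    Ideal.span_le.mpr (Set.range_subset_iff.mpr hI)
  refine le_antisymm (fun f hf => mem_of_mem_colon_basis_sub (B := monomialBasis n k) (b := b)
    (c := c) monomialBasis_add hpq ?_ hK hle hf) hle
  intro m hm g hg
  refine coeffSum_boundedFiber_eq_zero (fun i => ?_) hg
  have hmi : m.1 i < α i := by
    by_contra! hi
    exact hm (monomialBasis_mem_of_le (Ideal.subset_span (Set.mem_range_self i)) hi)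
  exact (add_lt_add_left (add_lt_add_left hmi (p.1 i)) (μ.1 i)).trans_le (hα i)

end PolynomialRing

section FinThree

variable {k : Type*} [CommRing k] {b n : ℕ} {i j l : Fin 3}

/-- The quadric `quadric` in the polynomial ring `k[x₁, x₂, x₃][t₁, t₂, t₃, w]`. -/
noncomputable abbrev polynomialQuadric (k : Type*) [CommRing k] (b n : ℕ) (i j l : Fin 3) :
    MvPolynomial (Fin 4) (MvPolynomial (Fin 3) k) :=
  quadric (fun i => C (X i)) (fun i => X i.castSucc) (X (Fin.last 3)) b n i j l

theorem polynomialQuadric_eq_sub (i j l : Fin 3) : polynomialQuadric k b n i j l =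
    monomialBasis 3 k
        (Finsupp.single i n + Finsupp.single j n, Finsupp.single (Fin.last 3) 2) -
      monomialBasis 3 k
        (Finsupp.single l (2 * b), Finsupp.single i.castSucc 1 + Finsupp.single j.castSucc 1) := by
  simp only [polynomialQuadric, quadric, monomialBasis_apply, monomial_add_single,
    ← X_pow_eq_monomial, map_mul, map_pow, pow_one, mul_pow, mul_assoc]

theorem colon_span_polynomialQuadric (hij : i ≠ j) (hil : i ≠ l) (hjl : j ≠ l) {r s : ℕ}
    (hrs : r + s ≤ b + n) {K : Ideal (MvPolynomial (Fin 4) (MvPolynomial (Fin 3) k))}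
    (hLK : polynomialSyzygyIdeal 3 k b (b + n) ≤ K)
    (hK : K ≤ (polynomialSyzygyIdeal 3 k b (b + n)).colon {C (X l) ^ s})
    (hr : C (X l) ^ r * polynomialQuadric k b n i j l ∈ K) :
    K.colon (Ideal.span {polynomialQuadric k b n i j l}) =
      Ideal.span {C (X i) ^ b, C (X j) ^ b, C (X l) ^ r} := by
  have hcover : ∀ m, m = i ∨ m = j ∨ m = l := by
    intro m
    simpa only [univ_fin_three_eq_of_ne hij hil hjl, Finset.mem_insert, Finset.mem_singleton] using
      Finset.mem_univ m
  have hrange : Set.range (fun m => C (X m) ^ (if m = l then r else b)) =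
      ({C (X i) ^ b, C (X j) ^ b, C (X l) ^ r} :
        Set (MvPolynomial (Fin 4) (MvPolynomial (Fin 3) k))) := by
    have huniv : Set.univ = {i, j, l} := (Set.eq_univ_of_forall hcover).symm
    rw [← Set.image_univ, huniv]
    simp only [Set.image_insert_eq, Set.image_singleton, hil, hjl, if_true, if_false]
  rw [← hrange, polynomialQuadric_eq_sub]
  refine colon_span_monomialBasis_sub (b := b) (c := b + n) (μ := (Finsupp.single l s, 0))
    ?_ (fun m => ?_) ?_ fun m => ?_
  · simp [-Fin.reduceLast, tDegree, Finset.sum_add_distrib, Finsupp.single_apply]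
  · rcases hcover m with rfl | rfl | rfl <;> simp [*, Ne.symm]
  · rwa [monomialBasis_single_zero]
  · rw [← polynomialQuadric_eq_sub, Submodule.mem_colon_singleton, smul_eq_mul]
    rcases hcover m with rfl | rfl | rfl
    · rw [if_neg hil]
      exact hLK (pow_mul_quadric_mem _ _ _ b n hij hil hjl)
    · rw [if_neg hjl]
      exact hLK (pow_mul_quadric_mem_right _ _ _ b n hij hil hjl)
    · rwa [if_pos rfl]

variable (k b n) (hij : i ≠ j) (hil : i ≠ l) (hjl : j ≠ l)
include hij hil hjl

theorem colon_polynomialSyzygyIdeal :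
    (polynomialSyzygyIdeal 3 k b (b + n)).colon (Ideal.span {polynomialQuadric k b n i j l}) =
      Ideal.span {C (X i) ^ b, C (X j) ^ b, C (X l) ^ (b + n)} :=
  colon_span_polynomialQuadric hij hil hjl (b + n).add_zero.le le_rfl Ideal.le_colon
    (pow_mul_quadric_mem_third _ _ _ b n hij hil hjl)

theorem colon_polynomialSyzygyIdeal_sup_span :
    (polynomialSyzygyIdeal 3 k b (b + n) ⊔ Ideal.span {polynomialQuadric k b n i j l}).colon
        (Ideal.span {polynomialQuadric k b n i l j}) =
      Ideal.span {C (X i) ^ b, C (X l) ^ b, C (X j) ^ n} := by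
  have hmem : polynomialQuadric k b n i j l ∈
      polynomialSyzygyIdeal 3 k b (b + n) ⊔ Ideal.span {polynomialQuadric k b n i j l} :=
    Ideal.mem_sup_right (Ideal.mem_span_singleton_self _)
  refine colon_span_polynomialQuadric hil hij hjl.symm (s := b) (add_comm n b).le le_sup_left ?_
    (pow_mul_quadric_mem_of_mem _ _ _ b n i l j le_sup_left hmem)
  rw [sup_le_iff, Ideal.span_singleton_le_iff_mem, Submodule.mem_colon_singleton, smul_eq_mul,
    mul_comm]
  exact ⟨Ideal.le_colon, pow_mul_quadric_mem_right _ _ _ b n hij hil hjl⟩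

theorem colon_polynomialSyzygyIdeal_sup_span_pair :
    (polynomialSyzygyIdeal 3 k b (b + n) ⊔
        Ideal.span {polynomialQuadric k b n i j l, polynomialQuadric k b n i l j}).colon
          (Ideal.span {polynomialQuadric k b n j l i}) =
      Ideal.span {C (X j) ^ b, C (X l) ^ b, C (X i) ^ n} := by
  have hmem : polynomialQuadric k b n j i l ∈ polynomialSyzygyIdeal 3 k b (b + n) ⊔
      Ideal.span {polynomialQuadric k b n i j l, polynomialQuadric k b n i l j} := by
    rw [polynomialQuadric, quadric_comm]
    exact Ideal.mem_sup_right (Ideal.subset_span (Set.mem_insert _ _))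
  refine colon_span_polynomialQuadric hjl hij.symm hil.symm (s := b) (add_comm n b).le le_sup_left
    ?_ (pow_mul_quadric_mem_of_mem _ _ _ b n j l i le_sup_left hmem)
  rw [sup_le_iff, Ideal.span_le, Set.pair_subset_iff]
  simp only [SetLike.mem_coe, Submodule.mem_colon_singleton, smul_eq_mul,
    mul_comm _ (C (X i) ^ b)]
  exact ⟨Ideal.le_colon, pow_mul_quadric_mem _ _ _ b n hij hil hjl,
    pow_mul_quadric_mem _ _ _ b n hil hij hjl.symm⟩

end FinThree
theorem stmt18_general {k : Type*} [CommRing k] (a b : ℕ) (h : 2 * b ≤ a) :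
    let R := MvPolynomial (Fin 3) k
    let x : R := X 0
    let y : R := X 1
    let z : R := X 2
    let S := MvPolynomial (Fin 4) R
    let t : S := X 0
    let u : S := X 1
    let v : S := X 2
    let w : S := X 3
    let f1 : S := C (x ^ a) * u - C (y ^ a) * t
    let f2 : S := C (x ^ a) * v - C (z ^ a) * t
    let f3 : S := C (y ^ a) * v - C (z ^ a) * u
    let g1 : S := C (x ^ (a - b)) * w - C ((y * z) ^ b) * t
    let g2 : S := C (y ^ (a - b)) * w - C ((x * z) ^ b) * u
    let g3 : S := C (z ^ (a - b)) * w - C ((x * y) ^ b) * v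
    let H1 : S := C ((x * y) ^ (a - 2 * b)) * w ^ 2 - C (z ^ (2 * b)) * t * u
    let H2 : S := C ((x * z) ^ (a - 2 * b)) * w ^ 2 - C (y ^ (2 * b)) * t * v
    let H3 : S := C ((y * z) ^ (a - 2 * b)) * w ^ 2 - C (x ^ (2 * b)) * u * v
    let L : Ideal S := Ideal.span {f1, f2, f3, g1, g2, g3}
    (L.colon (Ideal.span {H1}) =
      Ideal.span {C (x ^ b), C (y ^ b), C (z ^ (a - b))}) ∧
    ((Ideal.span {f1, f2, f3, g1, g2, g3, H1}).colon (Ideal.span {H2}) =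
      Ideal.span {C (x ^ b), C (y ^ (a - 2 * b)), C (z ^ b)}) ∧
    ((Ideal.span {f1, f2, f3, g1, g2, g3, H1, H2}).colon (Ideal.span {H3}) =
      Ideal.span {C (x ^ (a - 2 * b)), C (y ^ b), C (z ^ b)}) := by
  obtain ⟨n, rfl⟩ : ∃ n, a = b + (b + n) := ⟨a - 2 * b, by omega⟩
  rw [Nat.add_sub_cancel_left, show b + (b + n) - 2 * b = n by omega]
  intro R x y z S t u v w f1 f2 f3 g1 g2 g3 H1 H2 H3 L
  have hL : L = polynomialSyzygyIdeal 3 k b (b + n) := by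
    simp only [L, f1, f2, f3, g1, g2, g3, syzygyIdeal_fin_three, map_pow, map_mul]
    rfl
  have hH1 : H1 = polynomialQuadric k b n 0 1 2 := by simp only [H1, map_pow, map_mul]; rfl
  have hH2 : H2 = polynomialQuadric k b n 0 2 1 := by simp only [H2, map_pow, map_mul]; rfl
  have hH3 : H3 = polynomialQuadric k b n 1 2 0 := by simp only [H3, map_pow, map_mul]; rfl
  have hL1 : Ideal.span {f1, f2, f3, g1, g2, g3, H1} = L ⊔ Ideal.span {H1} := by
    simp only [L, Ideal.span_insert, sup_assoc]
  have hL2 : Ideal.span {f1, f2, f3, g1, g2, g3, H1, H2} = L ⊔ Ideal.span {H1, H2} := by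
    simp only [L, Ideal.span_insert, sup_assoc]
  rw [hL1, hL2, hL, hH1, hH2, hH3, Set.pair_comm (C (y ^ n)),
    Set.insert_comm (C (x ^ n)), Set.pair_comm (C (x ^ n))]
  simp only [map_pow]
  exact ⟨colon_polynomialSyzygyIdeal k b n (by decide) (by decide) (by decide),
    colon_polynomialSyzygyIdeal_sup_span k b n (by decide) (by decide) (by decide),
    colon_polynomialSyzygyIdeal_sup_span_pair k b n (by decide) (by decide) (by decide)⟩

/-- In `S = k[x,y,z,t,u,v,w]` with `a > 2b > 0`, let `L` be the
ideal generated by the syzygy forms `f1, f2, f3, g1, g2, g3`.  Then: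
(i) `L : H1 = (x^b, y^b, z^{a-b})`;
(ii) `(L, H1) : H2 = (x^b, y^{a-2b}, z^b)`;
(iii) `(L, H1, H2) : H3 = (x^{a-2b}, y^b, z^b)`. -/
theorem stmt18 {k : Type*} [Field k] (a b : ℕ) (hb : 0 < b) (h2b : 2 * b < a) :
    let R := MvPolynomial (Fin 3) k
    let x : R := X 0
    let y : R := X 1
    let z : R := X 2
    let S := MvPolynomial (Fin 4) R
    let t : S := X 0
    let u : S := X 1
    let v : S := X 2
    let w : S := X 3
    let f1 : S := C (x ^ a) * u - C (y ^ a) * t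
    let f2 : S := C (x ^ a) * v - C (z ^ a) * t
    let f3 : S := C (y ^ a) * v - C (z ^ a) * u
    let g1 : S := C (x ^ (a - b)) * w - C ((y * z) ^ b) * t
    let g2 : S := C (y ^ (a - b)) * w - C ((x * z) ^ b) * u
    let g3 : S := C (z ^ (a - b)) * w - C ((x * y) ^ b) * v
    let H1 : S := C ((x * y) ^ (a - 2 * b)) * w ^ 2 - C (z ^ (2 * b)) * t * u
    let H2 : S := C ((x * z) ^ (a - 2 * b)) * w ^ 2 - C (y ^ (2 * b)) * t * v
    let H3 : S := C ((y * z) ^ (a - 2 * b)) * w ^ 2 - C (x ^ (2 * b)) * u * v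
    let L : Ideal S := Ideal.span {f1, f2, f3, g1, g2, g3}
    (L.colon (Ideal.span {H1}) =
      Ideal.span {C (x ^ b), C (y ^ b), C (z ^ (a - b))}) ∧
    ((Ideal.span {f1, f2, f3, g1, g2, g3, H1}).colon (Ideal.span {H2}) =
      Ideal.span {C (x ^ b), C (y ^ (a - 2 * b)), C (z ^ b)}) ∧
    ((Ideal.span {f1, f2, f3, g1, g2, g3, H1, H2}).colon (Ideal.span {H3}) =
      Ideal.span {C (x ^ (a - 2 * b)), C (y ^ b), C (z ^ b)}) :=
  stmt18_general a b h2b.le
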